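/- Let N ≥ 2 be an integer and let U be a unitary on (ℂ²)^{⊗N} of the form U = g_m ⋯ g_1 (g_1 applied first), where each g_j is the Hadamard gate H on some qubit, the T gate on some qubit, or CNOT_{k,l} for some distinct qubits k, l ∈ {1,…,N}. Then there exist an integer M ≤ 192·N²·m + 2·m, real rotation angles, and a real phase φ such that the N-qubit Ry-Rz-CZ ansatz circuit of depth M with those angles equals e^{iφ}·U. (This expresses the strict universality of the Ry-Rz-CZ circuit family: it exactly represents, up to global phase and with depth polynomial in N and m, every circuit over the strictly universal gate set {H, T, CNOT}.) -/

import Mathlib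

/-!
Let a generalized circuit be a product of ladders interleaved with tensor products of *arbitrary*
single-qubit unitaries (`Circ`). Such circuits are closed under multiplication, with depths adding
up (`Circ.mul`), and by Euler angles each of them is an ansatz circuit whose depth is larger by
`2` (`Circ.exists_ansatz`): the rightmost `Rz` of an Euler decomposition commutes with the diagonal
ladder and merges with the previous layer, and at the very beginning of the circuit it is created
from the identity `Ladder_CZ² = 1`. It remains to realize each gate by a generalized circuit of
depth `O(N²)`. Single-qubit gates have depth `0`.

For a CNOT, consider conjugation by `Ladder_CZ · H^{⊗N}`. It sends `Z₁` to `X₁Z₂` and `X_kZ_{k+1}`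
to `X_{k+1}Z_{k+2}`, so conjugating a `π/4` rotation about `Z₁` yields the rotation about
`X_kZ_{k+1}` at depth `2k` (`Circ.rot_XZ`). With commuting involutions `P = Z_c`, `Q = X_t` one has
`CNOT_{c,t} = (1 + P + Q − PQ) / 2`, which factors into a rotation about `PQ` and two local
rotations (`pauli_identity`); this gives all nearest-neighbour CNOTs at depth at most `2N`.
Three of them make a swap, and conjugating by at most `N` swaps gives all CNOTs at depth at most
`12N²` (`Circ.CNOT`).
-/

open Complex

noncomputable section

/-- Basis states of `N` qubits: bit strings of length `N` (qubit `k` (1-based) ↦ index `k-1`). -/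
abbrev QState (N : ℕ) := Fin N → ZMod 2

/-- Operators on `(ℂ²)^{⊗N}`, as matrices in the computational basis. -/
abbrev QOp (N : ℕ) := Matrix (QState N) (QState N) ℂ

/-- Ry(θ) = [[cos(θ/2), −sin(θ/2)], [sin(θ/2), cos(θ/2)]]. -/
def RyM (θ : ℝ) : Matrix (ZMod 2) (ZMod 2) ℂ :=
  Matrix.of fun a b =>
    if a = 0 then (if b = 0 then ((Real.cos (θ/2) : ℝ) : ℂ) else -((Real.sin (θ/2) : ℝ) : ℂ))
    else (if b = 0 then ((Real.sin (θ/2) : ℝ) : ℂ) else ((Real.cos (θ/2) : ℝ) : ℂ))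

/-- Rz(θ) = diag(e^{−iθ/2}, e^{iθ/2}). -/
def RzM (θ : ℝ) : Matrix (ZMod 2) (ZMod 2) ℂ :=
  Matrix.of fun a b =>
    if a = b then
      (if a = 0 then Complex.exp (-(θ/2 : ℝ) * Complex.I) else Complex.exp ((θ/2 : ℝ) * Complex.I))
    else 0

/-- Hadamard gate. -/
def HM : Matrix (ZMod 2) (ZMod 2) ℂ :=
  Matrix.of fun a b => (1 / ((Real.sqrt 2 : ℝ) : ℂ)) * (if a = 1 ∧ b = 1 then -1 else 1)

/-- T gate = diag(1, e^{iπ/4}). -/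
def TM : Matrix (ZMod 2) (ZMod 2) ℂ :=
  Matrix.of fun a b =>
    if a = b then (if a = 0 then 1 else Complex.exp ((Real.pi/4 : ℝ) * Complex.I)) else 0

/-- S gate = diag(1, i). -/
def SM : Matrix (ZMod 2) (ZMod 2) ℂ :=
  Matrix.of fun a b => if a = b then (if a = 0 then 1 else Complex.I) else 0

/-- S† gate = diag(1, −i). -/
def SdgM : Matrix (ZMod 2) (ZMod 2) ℂ :=
  Matrix.of fun a b => if a = b then (if a = 0 then 1 else -Complex.I) else 0

/-- Pauli X gate. -/
def XM : Matrix (ZMod 2) (ZMod 2) ℂ :=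
  Matrix.of fun a b => if a = b then 0 else 1

/-- A single-qubit gate `g` acting on qubit with 0-based index `k`, identity elsewhere. -/
def gate1 {N : ℕ} (g : Matrix (ZMod 2) (ZMod 2) ℂ) (k : Fin N) : QOp N :=
  Matrix.of fun x y => if ∀ j, j ≠ k → x j = y j then g (x k) (y k) else 0

/-- CZ gate on (0-based) qubits `k`, `l`. -/
def CZg {N : ℕ} (k l : Fin N) : QOp N :=
  Matrix.of fun x y => if x = y then (if x k = 1 ∧ x l = 1 then (-1 : ℂ) else 1) else 0

/-- CNOT gate with control `c` and target `t` (0-based): |y⟩ ↦ |y with bit t replaced by y t + y c⟩. -/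
def CNOTg {N : ℕ} (c t : Fin N) : QOp N :=
  Matrix.of fun x y => if x = Function.update y t (y t + y c) then (1 : ℂ) else 0

/-- The `k`-th bit (0-based) of a basis state, `0` when out of range. -/
def bitAt {N : ℕ} (x : QState N) (k : ℕ) : ZMod 2 :=
  if h : k < N then x ⟨k, h⟩ else 0

/-- Ladder of CZ gates: `∏_{k=1}^{N−1} CZ_{k,k+1}` (all factors commute, so it is
the diagonal matrix with entry `(−1)^{#{adjacent 11 pairs}}`). -/
def ladderCZ (N : ℕ) : QOp N :=
  Matrix.of fun x y =>
    if x = y then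
      ∏ k ∈ Finset.range (N - 1), (if bitAt x k = 1 ∧ bitAt x (k + 1) = 1 then (-1 : ℂ) else 1)
    else 0

/-- First CNOT layer of the ladder: simultaneous CNOT_{k+1,k} for 1-based `k ∈ {1,…,N−1}`,
`k ≢ N (mod 2)` (control qubit `k+1`, target qubit `k`; disjoint pairs). -/
def layer1Map (N : ℕ) (y : QState N) : QState N :=
  fun i => if (i : ℕ) + 1 < N ∧ ((i : ℕ) + 1) % 2 ≠ N % 2 then y i + bitAt y ((i : ℕ) + 1) else y i

/-- Second CNOT layer of the ladder: simultaneous CNOT_{k+1,k} for 1-based `k ∈ {1,…,N−1}`,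
`k ≡ N (mod 2)`. -/
def layer2Map (N : ℕ) (y : QState N) : QState N :=
  fun i => if (i : ℕ) + 1 < N ∧ ((i : ℕ) + 1) % 2 = N % 2 then y i + bitAt y ((i : ℕ) + 1) else y i

/-- Ladder of CNOT gates: `L₂ · L₁` with `L₁` applied first. It is a permutation
matrix of the composed bit-string map. -/
def ladderCNOT (N : ℕ) : QOp N :=
  Matrix.of fun x y => if x = layer2Map N (layer1Map N y) then (1 : ℂ) else 0

/-- Rotation layer `⊗_{k} Rz(β_k)·Ry(α_k)`. -/
def rotYZ {N : ℕ} (α β : Fin N → ℝ) : QOp N :=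
  Matrix.of fun x y => ∏ k : Fin N, (RzM (β k) * RyM (α k)) (x k) (y k)

/-- The Ry-Rz-CZ ansatz of depth `M`:
`R_M · Ladder_CZ · R_{M−1} ⋯ Ladder_CZ · R_0` (`R_0` applied first), with
rotation layer `i` using angles `α i`, `β i`. -/
def ansatzYZ (N : ℕ) (α β : ℕ → Fin N → ℝ) : ℕ → QOp N
  | 0 => rotYZ (α 0) (β 0)
  | (M + 1) => rotYZ (α (M + 1)) (β (M + 1)) * ladderCZ N * ansatzYZ N α β M

/-- Rotation layer `⊗_{k} Ry(α_k)`. -/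
def rotY {N : ℕ} (α : Fin N → ℝ) : QOp N :=
  Matrix.of fun x y => ∏ k : Fin N, RyM (α k) (x k) (y k)

/-- The Ry-CNOT ansatz of depth `M`:
`R_M · Ladder_CNOT · R_{M−1} ⋯ Ladder_CNOT · R_0` (`R_0` applied first). -/
def ansatzY (N : ℕ) (α : ℕ → Fin N → ℝ) : ℕ → QOp N
  | 0 => rotY (α 0)
  | (M + 1) => rotY (α (M + 1)) * ladderCNOT N * ansatzY N α M

/-- Product of CZ gates `CZ_{q,q+1}` (1-based qubits) over all `q` satisfying `P`
(a diagonal matrix, since all CZ's commute). -/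
def czLayer (N : ℕ) (P : ℕ → Prop) [DecidablePred P] : QOp N :=
  Matrix.of fun x y =>
    if x = y then
      ∏ p ∈ Finset.range N,
        (if P (p + 1) ∧ bitAt x p = 1 ∧ bitAt x (p + 1) = 1 then (-1 : ℂ) else 1)
    else 0

/-- Hadamard gates on all 1-based qubits `q` satisfying `P`, identity elsewhere. -/
def hadOn (N : ℕ) (P : ℕ → Prop) [DecidablePred P] : QOp N :=
  Matrix.of fun x y =>
    ∏ k : Fin N, (if P ((k : ℕ) + 1) then HM (x k) (y k) else if x k = y k then (1 : ℂ) else 0)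

/-- The circuit `D_k` (1-based qubits, rightmost factor applied first):
`D_{2i} = (∏_{j=1}^{i−1} CZ_{2j,2j+1}) · (∏_{q=2}^{2i} H_q) · (∏_{j=1}^{i} CZ_{2j−1,2j})`,
`D_{2i+1} = (∏_{j=1}^{i} CZ_{2j,2j+1}) · (∏_{q=2}^{2i+1} H_q) · (∏_{j=1}^{i} CZ_{2j−1,2j})`. -/
def Dgate (N k : ℕ) : QOp N :=
  czLayer N (fun p => p % 2 = 0 ∧ 2 ≤ p ∧ p ≤ k - 1) *
    hadOn N (fun q => 2 ≤ q ∧ q ≤ k) *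
    czLayer N (fun p => p % 2 = 1 ∧ p ≤ k - 1)

/-- `U ⊗ I`: the operator acting as `U` on qubits `1,…,N` and identity on `A` ancilla qubits. -/
def embed (N A : ℕ) (U : QOp N) : QOp (N + A) :=
  Matrix.of fun x y =>
    U (fun i => x (Fin.castAdd A i)) (fun i => y (Fin.castAdd A i)) *
      (if ∀ i : Fin A, x (Fin.natAdd N i) = y (Fin.natAdd N i) then (1 : ℂ) else 0)

end
/-- The tensor product `⊗ₖ g k` of single-qubit operators. -/
noncomputable def tens {N : ℕ} (g : Fin N → Matrix (ZMod 2) (ZMod 2) ℂ) : QOp N :=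
  Matrix.of fun x y => ∏ k, g k (x k) (y k)

/-- Pauli Z gate. -/
noncomputable def ZM : Matrix (ZMod 2) (ZMod 2) ℂ :=
  Matrix.of fun a b => if a = b then (if a = 0 then 1 else -1) else 0

lemma sum_bit (f : ZMod 2 → ℂ) : ∑ a, f a = f 0 + f 1 := Fin.sum_univ_two f

lemma bit_cases (a : ZMod 2) : a = 0 ∨ a = 1 := by revert a; decide

lemma ext_bit {g h : Matrix (ZMod 2) (ZMod 2) ℂ} (h00 : g 0 0 = h 0 0) (h01 : g 0 1 = h 0 1)
    (h10 : g 1 0 = h 1 0) (h11 : g 1 1 = h 1 1) : g = h := by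
  ext a b
  rcases bit_cases a with rfl | rfl <;> rcases bit_cases b with rfl | rfl <;> assumption

lemma tens_mul {N : ℕ} (g h : Fin N → Matrix (ZMod 2) (ZMod 2) ℂ) :
    tens g * tens h = tens (fun k => g k * h k) := by
  ext x y
  simp only [tens, Matrix.mul_apply, Matrix.of_apply]
  rw [Finset.prod_univ_sum, Fintype.piFinset_univ]
  simp only [Finset.prod_mul_distrib]

lemma tens_diagonal {N : ℕ} (f : Fin N → ZMod 2 → ℂ) :
    tens (fun k => Matrix.diagonal (f k)) = Matrix.diagonal (fun x => ∏ k, f k (x k)) := by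
  ext x y
  simp only [tens, Matrix.of_apply]
  by_cases h : x = y
  · subst h; simp
  · rw [Matrix.diagonal_apply_ne _ h]
    obtain ⟨j, hj⟩ := Function.ne_iff.mp h
    exact Finset.prod_eq_zero (Finset.mem_univ j) (Matrix.diagonal_apply_ne _ hj)

lemma tens_one {N : ℕ} : tens (fun _ : Fin N => 1) = 1 := by
  have := tens_diagonal (N := N) (fun _ _ => 1)
  simpa using this

lemma gate1_eq_tens {N : ℕ} (g : Matrix (ZMod 2) (ZMod 2) ℂ) (k : Fin N) :
    gate1 g k = tens (Function.update (fun _ => 1) k g) := by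
  ext x y
  simp only [gate1, tens, Matrix.of_apply]
  split_ifs with h
  · rw [← Finset.mul_prod_erase Finset.univ _ (Finset.mem_univ k), Finset.prod_eq_one]
    · simp
    · intro j hj
      have hj := Finset.ne_of_mem_erase hj
      simp [Function.update_of_ne hj, h j hj]
  · push Not at h
    obtain ⟨j, hj, hne⟩ := h
    refine (Finset.prod_eq_zero (Finset.mem_univ j) ?_).symm
    simp [Function.update_of_ne hj, Matrix.one_apply_ne hne]

lemma gate1_mul {N : ℕ} (g h : Matrix (ZMod 2) (ZMod 2) ℂ) (k : Fin N) :
    gate1 g k * gate1 h k = gate1 (g * h) k := by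
  simp only [gate1_eq_tens, tens_mul]
  congr 1; ext1 j
  by_cases hj : j = k
  · subst hj; simp
  · simp [Function.update_of_ne hj]

lemma gate1_comm {N : ℕ} (g h : Matrix (ZMod 2) (ZMod 2) ℂ) {k l : Fin N} (hkl : k ≠ l) :
    gate1 g k * gate1 h l = gate1 h l * gate1 g k := by
  simp only [gate1_eq_tens, tens_mul]
  congr 1; ext1 j
  by_cases hj : j = k
  · subst hj; simp [Function.update_of_ne hkl]
  · simp [Function.update_of_ne hj]

lemma gate1_one {N : ℕ} (k : Fin N) : gate1 1 k = 1 := by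
  rw [gate1_eq_tens, ← tens_one]; congr 1; exact Function.update_eq_self k _

lemma gate1_add {N : ℕ} (g h : Matrix (ZMod 2) (ZMod 2) ℂ) (k : Fin N) :
    gate1 (g + h) k = gate1 g k + gate1 h k := by
  ext x y; simp only [gate1, Matrix.of_apply, Matrix.add_apply]; split_ifs <;> simp

lemma gate1_smul {N : ℕ} (c : ℂ) (g : Matrix (ZMod 2) (ZMod 2) ℂ) (k : Fin N) :
    gate1 (c • g) k = c • gate1 g k := by
  ext x y; simp only [gate1, Matrix.of_apply, Matrix.smul_apply]; split_ifs <;> simp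

lemma XM_sq : XM * XM = 1 := by
  apply ext_bit <;> simp [XM, Matrix.mul_apply, sum_bit]

lemma ZM_sq : ZM * ZM = 1 := by
  apply ext_bit <;> simp [ZM, Matrix.mul_apply]

lemma sqrt_two_inv_mul : ((Real.sqrt 2 : ℝ) : ℂ)⁻¹ * ((Real.sqrt 2 : ℝ) : ℂ)⁻¹ = 1 / 2 := by
  rw [← mul_inv, ← Complex.ofReal_mul, Real.mul_self_sqrt (by norm_num)]; norm_num

lemma HM_sq : HM * HM = 1 := by
  have := sqrt_two_inv_mul
  apply ext_bit <;> simp [HM, Matrix.mul_apply, sum_bit, this] <;> norm_num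

lemma HM_conj_Z : HM * ZM * HM = XM := by
  have := sqrt_two_inv_mul
  apply ext_bit <;> simp [HM, ZM, XM, Matrix.mul_apply, sum_bit, this] <;> norm_num

lemma HM_conj_X : HM * XM * HM = ZM := by
  have := sqrt_two_inv_mul
  apply ext_bit <;> simp [HM, ZM, XM, Matrix.mul_apply, sum_bit, this] <;> norm_num

lemma HM_mem : HM ∈ Matrix.unitaryGroup (ZMod 2) ℂ := by
  have h : star HM = HM := by
    apply ext_bit <;> simp [HM, Matrix.star_apply]
  rw [Matrix.mem_unitaryGroup_iff, h, HM_sq]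

lemma TM_mem : TM ∈ Matrix.unitaryGroup (ZMod 2) ℂ := by
  rw [Matrix.mem_unitaryGroup_iff]
  apply ext_bit <;> simp [TM, Matrix.mul_apply, Matrix.star_apply, ← Complex.exp_conj,
    ← Complex.exp_add, map_ofNat]

/-! ### Circuits with arbitrary local layers -/

/-- `Circ N d U`: the operator `U` is a product `W_d · Ladder_CZ · W_{d−1} ⋯ Ladder_CZ · W_0`
in which every `W_i` is a tensor product of arbitrary single-qubit unitaries. Global phases are
absorbed in the `W_i`. -/
inductive Circ (N : ℕ) : ℕ → QOp N → Prop
  | base (g : Fin N → Matrix (ZMod 2) (ZMod 2) ℂ)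
      (hg : ∀ k, g k ∈ Matrix.unitaryGroup (ZMod 2) ℂ) : Circ N 0 (tens g)
  | step (g : Fin N → Matrix (ZMod 2) (ZMod 2) ℂ)
      (hg : ∀ k, g k ∈ Matrix.unitaryGroup (ZMod 2) ℂ) (d : ℕ) (U : QOp N) (hU : Circ N d U) :
      Circ N (d + 1) (tens g * ladderCZ N * U)

lemma Circ.mul {N d e : ℕ} {U V : QOp N} (hU : Circ N d U) (hV : Circ N e V) :
    Circ N (d + e) (U * V) := by
  induction hU with
  | base g hg =>
    cases hV with
    | base h hh =>
      rw [tens_mul]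
      exact Circ.base _ fun k => mul_mem (hg k) (hh k)
    | step h hh e V hV =>
      rw [← mul_assoc, ← mul_assoc, tens_mul, zero_add]
      exact Circ.step _ (fun k => mul_mem (hg k) (hh k)) _ _ hV
  | step g hg d U hU ih =>
    rw [mul_assoc, add_right_comm]
    exact Circ.step g hg _ _ ih

lemma Circ.single {N : ℕ} {g : Matrix (ZMod 2) (ZMod 2) ℂ}
    (hg : g ∈ Matrix.unitaryGroup (ZMod 2) ℂ) (k : Fin N) : Circ N 0 (gate1 g k) := by
  rw [gate1_eq_tens]
  refine Circ.base _ fun j => ?_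
  by_cases hj : j = k
  · subst hj; simpa using hg
  · rw [Function.update_of_ne hj]; exact one_mem _

lemma Circ.one {N : ℕ} : Circ N 0 (1 : QOp N) := by
  rw [← tens_one]; exact Circ.base _ fun _ => one_mem _

lemma Circ.ladder {N : ℕ} : Circ N 1 (ladderCZ N) := by
  have := Circ.step (N := N) (fun _ => 1) (fun _ => one_mem _) 0 1 Circ.one
  simpa [tens_one] using this

/-- The Hadamard gate on every qubit. -/
noncomputable def hadAll (N : ℕ) : QOp N := tens fun _ => HM

lemma Circ.hadLayer {N : ℕ} : Circ N 0 (hadAll N) := Circ.base _ fun _ => HM_mem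

lemma hadAll_sq (N : ℕ) : hadAll N * hadAll N = 1 := by
  simp [hadAll, tens_mul, HM_sq, tens_one]

lemma hadAll_conj {N : ℕ} (g : Matrix (ZMod 2) (ZMod 2) ℂ) (k : Fin N) :
    hadAll N * gate1 g k * hadAll N = gate1 (HM * g * HM) k := by
  simp only [gate1_eq_tens, hadAll, tens_mul]
  congr 1; ext1 j
  by_cases hj : j = k
  · subst hj; simp
  · simp [Function.update_of_ne hj, HM_sq]

lemma hadAll_conj_mul (N : ℕ) (P Q : QOp N) : hadAll N * (P * Q) * hadAll N =
    (hadAll N * P * hadAll N) * (hadAll N * Q * hadAll N) := by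
  calc _ = hadAll N * P * 1 * Q * hadAll N := by noncomm_ring
    _ = _ := by rw [← hadAll_sq]; noncomm_ring

/-! ### Conjugating Pauli operators by the ladder -/

/-- The entry of the controlled-Z gate on bits `a`, `b`. -/
noncomputable def czSign (a b : ZMod 2) : ℂ := if a = 1 ∧ b = 1 then -1 else 1

/-- The sign `(−1)^a`. -/
noncomputable def bitSign (a : ZMod 2) : ℂ := if a = 0 then 1 else -1

/-- The diagonal of the ladder. -/
noncomputable def ladderSign {N : ℕ} (x : QState N) : ℂ :=
  ∏ k ∈ Finset.range (N - 1), czSign (bitAt x k) (bitAt x (k + 1))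

lemma ladderCZ_eq (N : ℕ) : ladderCZ N = Matrix.diagonal ladderSign := by
  ext x y; simp only [ladderCZ, Matrix.of_apply, Matrix.diagonal_apply]; rfl

lemma czSign_sq (a b : ZMod 2) : czSign a b * czSign a b = 1 := by
  unfold czSign; split_ifs <;> simp

lemma czSign_flip_left (a b : ZMod 2) : czSign (a + 1) b * czSign a b = bitSign b := by
  rcases bit_cases a with rfl | rfl <;> rcases bit_cases b with rfl | rfl <;>
    simp [czSign, bitSign, show (1 + 1 : ZMod 2) = 0 from rfl]

lemma czSign_flip_right (a b : ZMod 2) : czSign a (b + 1) * czSign a b = bitSign a := by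
  rcases bit_cases a with rfl | rfl <;> rcases bit_cases b with rfl | rfl <;>
    simp [czSign, bitSign, show (1 + 1 : ZMod 2) = 0 from rfl]

lemma ladder_sq (N : ℕ) : ladderCZ N * ladderCZ N = 1 := by
  rw [ladderCZ_eq, Matrix.diagonal_mul_diagonal, ← Matrix.diagonal_one]
  congr 1; ext1 x
  simp [ladderSign, ← Finset.prod_mul_distrib, czSign_sq]

lemma ZM_eq : ZM = Matrix.diagonal bitSign := by
  apply ext_bit <;> simp [ZM, bitSign]

lemma gate1_Z {N : ℕ} (k : Fin N) :
    gate1 ZM k = Matrix.diagonal fun x : QState N => bitSign (x k) := by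
  ext x y
  rw [ZM_eq]
  simp only [gate1, Matrix.of_apply]
  by_cases h : x = y
  · subst h; simp
  · rw [Matrix.diagonal_apply_ne _ h]
    split_ifs with h'
    · refine Matrix.diagonal_apply_ne _ fun hk => h ?_
      ext1 j
      by_cases hj : j = k
      · subst hj; exact hk
      · exact h' j hj
    · rfl

/-- The bit string `y` with bit `k` flipped. -/
def flipBit {N : ℕ} (k : Fin N) (y : QState N) : QState N := Function.update y k (y k + 1)

lemma gate1_X {N : ℕ} (k : Fin N) (x y : QState N) :
    gate1 XM k x y = if x = flipBit k y then 1 else 0 := by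
  have h2 : ∀ a b : ZMod 2, (if a = b then (0 : ℂ) else 1) = if a = b + 1 then 1 else 0 := by
    intro a b
    rcases bit_cases a with rfl | rfl <;> rcases bit_cases b with rfl | rfl <;>
      simp [show (1 + 1 : ZMod 2) = 0 from rfl]
  simp only [gate1, XM, Matrix.of_apply, flipBit, Function.eq_update_iff, h2]
  by_cases h : ∀ j, j ≠ k → x j = y j
  · simp only [if_pos h, and_iff_left h]
  · simp only [h, and_false, if_false]

lemma bitAt_of_lt {N : ℕ} (x : QState N) {k : ℕ} (h : k < N) : bitAt x k = x ⟨k, h⟩ := by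
  simp [bitAt, h]

lemma bitAt_flip_self {N : ℕ} (y : QState N) {k : ℕ} (h : k < N) :
    bitAt (flipBit ⟨k, h⟩ y) k = bitAt y k + 1 := by
  simp [bitAt, h, flipBit]

lemma bitAt_flip_ne {N : ℕ} (y : QState N) {k j : ℕ} (h : k < N) (hj : j ≠ k) :
    bitAt (flipBit ⟨k, h⟩ y) j = bitAt y j := by
  unfold bitAt flipBit
  split_ifs with hjN
  · rw [Function.update_of_ne]; simpa using hj
  · rfl

lemma ladderSign_flip_zero {N : ℕ} (hN : 1 < N) (y : QState N) :
    ladderSign (flipBit ⟨0, by omega⟩ y) * ladderSign y = bitSign (y ⟨1, hN⟩) := by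
  rw [ladderSign, ladderSign, ← Finset.prod_mul_distrib, Finset.prod_eq_single 0]
  · rw [bitAt_flip_self, bitAt_flip_ne _ _ (by omega), czSign_flip_left]
    rw [bitAt_of_lt _ (by omega)]
  · intro j _ hj
    rw [bitAt_flip_ne _ _ hj, bitAt_flip_ne _ _ (by omega), czSign_sq]
  · intro h; simp at h; omega

lemma ladderSign_flip_succ {N k : ℕ} (hk : k + 2 < N) (y : QState N) :
    ladderSign (flipBit ⟨k + 1, by omega⟩ y) * ladderSign y =
      bitSign (y ⟨k, by omega⟩) * bitSign (y ⟨k + 2, hk⟩) := by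
  rw [ladderSign, ladderSign, ← Finset.prod_mul_distrib,
    Finset.prod_eq_mul k (k + 1) (by omega)]
  · rw [bitAt_flip_self, bitAt_flip_ne _ _ (by omega), bitAt_flip_ne _ _ (by omega),
      czSign_flip_left, czSign_flip_right, bitAt_of_lt _ (by omega), bitAt_of_lt _ (by omega)]
  · intro j _ hj
    rw [bitAt_flip_ne _ _ hj.2, bitAt_flip_ne _ _ (by omega), czSign_sq]
  · intro h; simp at h; omega
  · intro h; simp at h; omega

lemma ladder_conj_X_zero {N : ℕ} (hN : 1 < N) :
    ladderCZ N * gate1 XM ⟨0, by omega⟩ * ladderCZ N =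
      gate1 XM ⟨0, by omega⟩ * gate1 ZM ⟨1, hN⟩ := by
  ext x y
  rw [ladderCZ_eq, gate1_Z, Matrix.mul_diagonal, Matrix.diagonal_mul, Matrix.mul_diagonal, gate1_X]
  split_ifs with h
  · subst h; rw [mul_one, one_mul, ladderSign_flip_zero hN]
  · simp

lemma ladder_conj_X_succ {N k : ℕ} (hk : k + 2 < N) :
    ladderCZ N * gate1 XM ⟨k + 1, by omega⟩ * ladderCZ N =
      gate1 ZM ⟨k, by omega⟩ * gate1 XM ⟨k + 1, by omega⟩ * gate1 ZM ⟨k + 2, hk⟩ := by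
  ext x y
  rw [ladderCZ_eq, gate1_Z, gate1_Z, Matrix.mul_diagonal, Matrix.diagonal_mul,
    Matrix.mul_diagonal, Matrix.diagonal_mul, gate1_X]
  split_ifs with h
  · subst h
    rw [mul_one, mul_one, ladderSign_flip_succ hk]
    simp [flipBit]
  · simp

lemma ladder_comm_Z {N : ℕ} (k : Fin N) :
    ladderCZ N * gate1 ZM k = gate1 ZM k * ladderCZ N := by
  rw [ladderCZ_eq, gate1_Z, Matrix.diagonal_mul_diagonal, Matrix.diagonal_mul_diagonal]
  simp only [mul_comm]

/-! ### Pauli rotations and nearest-neighbour CNOTs -/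

/-- The rotation `e^{iπ/4} · exp(iπP/4)` about an involution `P`. -/
noncomputable def rot {N : ℕ} (P : QOp N) : QOp N := ((1 + I) / 2) • (1 + I • P)

lemma rot_conj {N : ℕ} {A B : QOp N} (h : A * B = 1) (P : QOp N) :
    A * rot P * B = rot (A * P * B) := by
  simp [rot, mul_add, add_mul, h]

lemma Circ.conj_rot {N d : ℕ} {P : QOp N} (h : Circ N d (rot P)) :
    Circ N (d + 2) (rot (ladderCZ N * (hadAll N * P * hadAll N) * ladderCZ N)) := by
  have h1 := ((((Circ.ladder (N := N)).mul Circ.hadLayer).mul h).mul Circ.hadLayer).mul Circ.ladder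
  have h2 : ladderCZ N * hadAll N * (hadAll N * ladderCZ N) = 1 := by
    rw [mul_assoc, ← mul_assoc (hadAll N), hadAll_sq, one_mul, ladder_sq]
  have h3 : ladderCZ N * (hadAll N * P * hadAll N) * ladderCZ N =
      (ladderCZ N * hadAll N) * P * (hadAll N * ladderCZ N) := by
    noncomm_ring
  rw [h3, ← rot_conj h2, ← mul_assoc]
  convert h1 using 1
  omega

lemma Circ.rot_Z {N : ℕ} (k : Fin N) : Circ N 0 (rot (gate1 ZM k)) := by
  have : rot (gate1 ZM k) = gate1 (((1 + I) / 2) • (1 + I • ZM)) k := by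
    rw [rot, gate1_smul, gate1_add, gate1_one, gate1_smul]
  rw [this]
  refine Circ.single ?_ k
  rw [Matrix.mem_unitaryGroup_iff]
  apply ext_bit <;> simp [ZM, Matrix.mul_apply, sum_bit, Matrix.star_apply, map_ofNat] <;>
    ring_nf <;> simp <;> ring

/-- Conjugation by `Ladder_CZ · H^{⊗N}` maps `Z₁ ↦ X₁Z₂` and `X_kZ_{k+1} ↦ X_{k+1}Z_{k+2}`, so
these operators travel along the line at one site per step. -/
lemma Circ.rot_XZ {N : ℕ} (k : ℕ) (hk : k + 1 < N) :
    Circ N (2 * (k + 1))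
      (rot (gate1 XM ⟨k, by omega⟩ * gate1 ZM ⟨k + 1, hk⟩)) := by
  induction k with
  | zero =>
    have := (Circ.rot_Z (N := N) ⟨0, by omega⟩).conj_rot
    rw [hadAll_conj, HM_conj_Z, ladder_conj_X_zero hk] at this
    exact this
  | succ k ih =>
    have := (ih (by omega)).conj_rot
    rw [hadAll_conj_mul, hadAll_conj, hadAll_conj, HM_conj_Z, HM_conj_X, ← mul_assoc,
      ladder_comm_Z, mul_assoc (gate1 ZM _), mul_assoc (gate1 ZM _),
      ladder_conj_X_succ hk, ← mul_assoc, ← mul_assoc, gate1_mul, ZM_sq, gate1_one, one_mul] at this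
    exact this

lemma Circ.rot_ZX {N : ℕ} (k : ℕ) (hk : k + 1 < N) :
    Circ N (2 * (k + 1))
      (rot (gate1 ZM ⟨k, by omega⟩ * gate1 XM ⟨k + 1, hk⟩)) := by
  have := (Circ.hadLayer.mul (Circ.rot_XZ k hk)).mul Circ.hadLayer
  rw [rot_conj (hadAll_sq N), hadAll_conj_mul, hadAll_conj, hadAll_conj, HM_conj_Z, HM_conj_X] at this
  convert this using 1
  omega

lemma CNOT_eq_pauli {N : ℕ} {c t : Fin N} (h : c ≠ t) :
    CNOTg c t = (1 / 2 : ℂ) • (1 + gate1 ZM c + gate1 XM t - gate1 ZM c * gate1 XM t) := by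
  ext x y
  have hne : y ≠ flipBit t y := by
    intro he
    have := congrFun he t
    simp [flipBit] at this
  rw [gate1_Z]
  simp only [CNOTg, Matrix.of_apply, Matrix.smul_apply, Matrix.sub_apply, Matrix.add_apply,
    Matrix.diagonal_mul, gate1_X, Matrix.diagonal_apply, Matrix.one_apply]
  have hc : flipBit t y c = y c := by simp [flipBit, h]
  rcases bit_cases (y c) with h0 | h0
  · rw [h0, add_zero, Function.update_eq_self]
    by_cases h1 : x = y
    · subst h1; simp [hne, h0, bitSign]; norm_num
    · by_cases h2 : x = flipBit t y
      · subst h2; simp [h1, hc, h0, bitSign]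
      · simp [h1, h2]
  · rw [h0]
    change (if x = flipBit t y then (1 : ℂ) else 0) = _
    by_cases h1 : x = y
    · subst h1; simp [hne, h0, bitSign]
    · by_cases h2 : x = flipBit t y
      · subst h2; simp [h1, hc, h0, bitSign]; norm_num
      · simp [h1, h2]

lemma pauli_identity {N : ℕ} {P Q : QOp N} (hP : P * P = 1) (hQ : Q * Q = 1) (h : P * Q = Q * P) :
    rot (P * Q) * (((1 - I) / 2) • (1 - I • P)) * (((1 + I) / 2) • (1 - I • Q)) =
      (1 / 2 : ℂ) • (1 + P + Q - P * Q) := by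
  have h1 : P * Q * P = Q := by rw [h, mul_assoc, hP, mul_one]
  have h2 : P * Q * Q = P := by rw [mul_assoc, hQ, mul_one]
  simp only [rot, smul_mul_assoc, mul_smul_comm, smul_smul, add_mul, mul_sub, sub_mul, mul_one,
    one_mul, smul_sub, smul_add, h1, h2, hQ]
  match_scalars <;> ring_nf <;> simp [pow_succ] <;> ring

lemma Circ.CNOT_of_rot {N d : ℕ} {c t : Fin N} (h : c ≠ t)
    (hr : Circ N d (rot (gate1 ZM c * gate1 XM t))) : Circ N d (CNOTg c t) := by
  rw [CNOT_eq_pauli h, ← pauli_identity (by rw [gate1_mul, ZM_sq, gate1_one])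
    (by rw [gate1_mul, XM_sq, gate1_one]) (gate1_comm _ _ h)]
  have e1 : ((1 - I) / 2) • (1 - I • gate1 ZM c) =
      gate1 (((1 - I) / 2) • (1 + (-I) • ZM)) c := by
    rw [gate1_smul, gate1_add, gate1_one, gate1_smul, neg_smul, ← sub_eq_add_neg]
  have e2 : ((1 + I) / 2) • (1 - I • gate1 XM t) =
      gate1 (((1 + I) / 2) • (1 + (-I) • XM)) t := by
    rw [gate1_smul, gate1_add, gate1_one, gate1_smul, neg_smul, ← sub_eq_add_neg]
  rw [e1, e2]
  refine (hr.mul (Circ.single ?_ c)).mul (Circ.single ?_ t)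
  · rw [Matrix.mem_unitaryGroup_iff]
    apply ext_bit <;> simp [ZM, Matrix.mul_apply, sum_bit, Matrix.star_apply, map_ofNat] <;>
      ring_nf <;> simp <;> ring
  · rw [Matrix.mem_unitaryGroup_iff]
    apply ext_bit <;> simp [XM, Matrix.mul_apply, sum_bit, Matrix.star_apply, map_ofNat] <;>
      ring_nf <;> simp <;> ring

lemma Circ.CNOT_up {N : ℕ} (k : ℕ) (hk : k + 1 < N) :
    Circ N (2 * (k + 1)) (CNOTg ⟨k, by omega⟩ ⟨k + 1, hk⟩) :=
  Circ.CNOT_of_rot (by simp) (Circ.rot_ZX k hk)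

lemma Circ.CNOT_down {N : ℕ} (k : ℕ) (hk : k + 1 < N) :
    Circ N (2 * (k + 1)) (CNOTg ⟨k + 1, hk⟩ ⟨k, by omega⟩) := by
  have hne : (⟨k + 1, hk⟩ : Fin N) ≠ ⟨k, by omega⟩ := by simp
  refine Circ.CNOT_of_rot hne ?_
  rw [gate1_comm _ _ hne]
  exact Circ.rot_XZ k hk

/-! ### Swaps and CNOTs between arbitrary qubits -/

/-- The operator `|y⟩ ↦ |f y⟩`. -/
noncomputable def mapOp {N : ℕ} (f : QState N → QState N) : QOp N :=
  Matrix.of fun x y => if x = f y then 1 else 0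

lemma mapOp_mul {N : ℕ} (f g : QState N → QState N) : mapOp f * mapOp g = mapOp (f ∘ g) := by
  ext x y
  simp [mapOp, Matrix.mul_apply]

lemma CNOT_eq_mapOp {N : ℕ} (c t : Fin N) :
    CNOTg c t = mapOp fun y => Function.update y t (y t + y c) := rfl

/-- The gate exchanging qubits `a` and `b`. -/
noncomputable def swapOp {N : ℕ} (a b : Fin N) : QOp N := mapOp fun y => y ∘ Equiv.swap a b

lemma swap_eq_CNOT {N : ℕ} {a b : Fin N} (h : a ≠ b) :
    swapOp a b = CNOTg a b * CNOTg b a * CNOTg a b := by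
  simp only [CNOT_eq_mapOp, mapOp_mul, swapOp]
  congr 1; ext y i
  have h2 : ∀ u v : ZMod 2, v = u + (v + u) := by decide
  have h3 : ∀ u v : ZMod 2, u = v + u + (u + (v + u)) := by decide
  by_cases ha : i = a
  · subst ha; simp [h, h.symm]; exact h2 _ _
  · by_cases hb : i = b
    · subst hb; simp [h, h.symm]; exact h3 _ _
    · simp [Equiv.swap_apply_of_ne_of_ne ha hb, ha, hb]

lemma swap_conj_CNOT {N : ℕ} (a b c t : Fin N) :
    swapOp a b * CNOTg c t * swapOp a b = CNOTg (Equiv.swap a b c) (Equiv.swap a b t) := by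
  simp only [CNOT_eq_mapOp, mapOp_mul, swapOp]
  congr 1; ext y i
  simp only [Function.comp_apply, Function.update_apply]
  have : Equiv.swap a b i = t ↔ i = Equiv.swap a b t := by
    rw [Equiv.swap_apply_eq_iff]
  simp [this]

lemma Circ.swap {N : ℕ} (k : ℕ) (hk : k + 1 < N) :
    Circ N (6 * (k + 1)) (swapOp ⟨k, by omega⟩ ⟨k + 1, hk⟩) := by
  rw [swap_eq_CNOT (by simp)]
  convert ((Circ.CNOT_up k hk).mul (Circ.CNOT_down k hk)).mul (Circ.CNOT_up k hk) using 1
  omega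

/-- A CNOT on qubits at distance `n + 1` is a nearest-neighbour one conjugated by `n` swaps. -/
lemma Circ.CNOT_dist {N : ℕ} (a n : ℕ) (h : a + n + 1 < N) :
    ∃ d ≤ 12 * N * (n + 1), Circ N d (CNOTg ⟨a, by omega⟩ ⟨a + n + 1, h⟩) ∧
      Circ N d (CNOTg ⟨a + n + 1, h⟩ ⟨a, by omega⟩) := by
  induction n with
  | zero => exact ⟨_, by omega, Circ.CNOT_up a h, Circ.CNOT_down a h⟩
  | succ n ih =>
    obtain ⟨d, hd, h1, h2⟩ := ih (by omega)
    have hs := Circ.swap (a + n + 1) h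
    have e1 : Equiv.swap (⟨a + n + 1, by omega⟩ : Fin N) ⟨a + n + 1 + 1, h⟩ ⟨a, by omega⟩ =
        ⟨a, by omega⟩ := by
      apply Equiv.swap_apply_of_ne_of_ne <;> simp <;> omega
    refine ⟨6 * (a + n + 1 + 1) + d + 6 * (a + n + 1 + 1), by nlinarith, ?_, ?_⟩
    · have := (hs.mul h1).mul hs
      rwa [swap_conj_CNOT, e1, Equiv.swap_apply_left] at this
    · have := (hs.mul h2).mul hs
      rwa [swap_conj_CNOT, e1, Equiv.swap_apply_left] at this

lemma Circ.CNOT {N : ℕ} {c t : Fin N} (h : c ≠ t) :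
    ∃ d ≤ 12 * N ^ 2, Circ N d (CNOTg c t) := by
  obtain ⟨c, hc⟩ := c
  obtain ⟨t, ht⟩ := t
  have h : c ≠ t := by simpa using h
  rcases lt_or_gt_of_ne h with h | h
  · obtain ⟨n, rfl⟩ := Nat.exists_eq_add_of_lt h
    obtain ⟨d, hd, h1, -⟩ := Circ.CNOT_dist c n ht
    exact ⟨d, hd.trans (by nlinarith), h1⟩
  · obtain ⟨n, rfl⟩ := Nat.exists_eq_add_of_lt h
    obtain ⟨d, hd, -, h1⟩ := Circ.CNOT_dist t n hc
    exact ⟨d, hd.trans (by nlinarith), h1⟩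

/-! ### Euler angles and the ansatz -/

lemma RzM_eq (θ : ℝ) : RzM θ = Matrix.diagonal fun a =>
    if a = 0 then Complex.exp (-(θ / 2 : ℝ) * I) else Complex.exp ((θ / 2 : ℝ) * I) := by
  apply ext_bit <;> simp [RzM]

lemma RzM_mul (a b : ℝ) : RzM a * RzM b = RzM (a + b) := by
  simp only [RzM_eq, Matrix.diagonal_mul_diagonal]
  congr 1; ext1 j
  split_ifs <;> rw [← Complex.exp_add] <;> congr 1 <;> push_cast <;> ring

lemma RzM_zero : RzM 0 = 1 := by apply ext_bit <;> simp [RzM]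

lemma RyM_zero : RyM 0 = 1 := by apply ext_bit <;> simp [RyM]

/-- Euler decomposition of `U(2)`. -/
lemma euler {g : Matrix (ZMod 2) (ZMod 2) ℂ} (hg : g ∈ Matrix.unitaryGroup (ZMod 2) ℂ) :
    ∃ φ α β γ : ℝ, g = Complex.exp (φ * I) • (RzM β * RyM α * RzM γ) := by
  have hs := Matrix.mem_unitaryGroup_iff'.mp hg
  have e00 := congrFun (congrFun hs 0) 0
  have e01 := congrFun (congrFun hs 0) 1
  have e11 := congrFun (congrFun hs 1) 1
  simp only [Matrix.mul_apply, sum_bit, Matrix.star_apply, Matrix.one_apply_eq,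
    Matrix.one_apply_ne (show (0 : ZMod 2) ≠ 1 by decide), RCLike.star_def] at e00 e01 e11
  set a := g 0 0 with ha
  set b := g 0 1 with hb
  set c := g 1 0 with hc
  set d := g 1 1 with hd
  set D := a * d - b * c with hD
  have hdD : d = D * starRingEnd ℂ a := by rw [hD]; linear_combination (-d) * e00 + c * e01
  have hbD : b = -(D * starRingEnd ℂ c) := by rw [hD]; linear_combination (-b) * e00 + a * e01
  have hDn : ‖D‖ = 1 := by
    have h1 : D * starRingEnd ℂ D = 1 := by
      rw [hbD, hdD] at e11
      simp only [map_neg, map_mul, Complex.conj_conj] at e11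
      linear_combination e11 - D * starRingEnd ℂ D * e00
    rw [Complex.mul_conj, Complex.normSq_eq_norm_sq] at h1
    norm_cast at h1
    exact (pow_eq_one_iff_of_nonneg (norm_nonneg D) two_ne_zero).mp h1
  have hn : ‖a‖ ^ 2 + ‖c‖ ^ 2 = 1 := by
    rw [mul_comm, Complex.mul_conj, mul_comm, Complex.mul_conj, Complex.normSq_eq_norm_sq,
      Complex.normSq_eq_norm_sq] at e00
    exact_mod_cast e00
  have hcos : Real.cos (Real.arccos ‖a‖) = ‖a‖ :=
    Real.cos_arccos (by linarith [norm_nonneg a]) (by nlinarith [norm_nonneg a, sq_nonneg ‖c‖])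
  have hsin : Real.sin (Real.arccos ‖a‖) = ‖c‖ := by
    rw [Real.sin_arccos, show 1 - ‖a‖ ^ 2 = ‖c‖ ^ 2 by linarith, Real.sqrt_sq (norm_nonneg c)]
  have pa := Complex.norm_mul_exp_arg_mul_I a
  have pc := Complex.norm_mul_exp_arg_mul_I c
  have pD := Complex.norm_mul_exp_arg_mul_I D
  rw [hDn, Complex.ofReal_one, one_mul] at pD
  have pa' : starRingEnd ℂ a = ‖a‖ * Complex.exp (-(a.arg * I)) := by
    conv_lhs => rw [← pa]
    rw [map_mul, Complex.conj_ofReal, ← Complex.exp_conj]; simp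
  have pc' : starRingEnd ℂ c = ‖c‖ * Complex.exp (-(c.arg * I)) := by
    conv_lhs => rw [← pc]
    rw [map_mul, Complex.conj_ofReal, ← Complex.exp_conj]; simp
  refine ⟨D.arg / 2, 2 * Real.arccos ‖a‖, c.arg - a.arg, D.arg - a.arg - c.arg, ?_⟩
  have key : ∀ (r : ℂ) (x y z w : ℂ), w = x + y + z →
      Complex.exp x * (Complex.exp y * r * Complex.exp z) = r * Complex.exp w := by
    rintro r x y z w rfl
    rw [Complex.exp_add, Complex.exp_add]; ring
  apply ext_bit
  · simp only [RzM_eq, RyM, Matrix.smul_apply, Matrix.mul_diagonal, Matrix.diagonal_mul]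
    simp [-Complex.ofReal_sin, -Complex.ofReal_cos, hcos, hsin]
    rw [key _ _ _ _ (a.arg * I) (by ring), pa]
  · simp only [RzM_eq, RyM, Matrix.smul_apply, Matrix.mul_diagonal, Matrix.diagonal_mul]
    simp [-Complex.ofReal_sin, -Complex.ofReal_cos, hcos, hsin]
    rw [key _ _ _ _ (D.arg * I + -(c.arg * I)) (by ring), Complex.exp_add, pD, ← hb, hbD, pc']
    ring
  · simp only [RzM_eq, RyM, Matrix.smul_apply, Matrix.mul_diagonal, Matrix.diagonal_mul]
    simp [-Complex.ofReal_sin, -Complex.ofReal_cos, hcos, hsin]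
    rw [key _ _ _ _ (c.arg * I) (by ring), pc]
  · simp only [RzM_eq, RyM, Matrix.smul_apply, Matrix.mul_diagonal, Matrix.diagonal_mul]
    simp [-Complex.ofReal_sin, -Complex.ofReal_cos, hcos, hsin]
    rw [key _ _ _ _ (D.arg * I + -(a.arg * I)) (by ring), Complex.exp_add, pD, ← hd, hdD, pa']
    ring

/-- The layer `⊗ₖ Rz(γ_k)`. -/
noncomputable def zLayer {N : ℕ} (γ : Fin N → ℝ) : QOp N := tens fun k => RzM (γ k)

lemma rotYZ_eq {N : ℕ} (α β : Fin N → ℝ) : rotYZ α β = tens fun k => RzM (β k) * RyM (α k) := rfl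

lemma rotYZ_zero_left {N : ℕ} (γ : Fin N → ℝ) : rotYZ 0 γ = zLayer γ := by
  simp [rotYZ_eq, zLayer, RyM_zero]

lemma zLayer_zero {N : ℕ} : zLayer (0 : Fin N → ℝ) = 1 := by
  simp [zLayer, RzM_zero, tens_one]

lemma zLayer_mul_rotYZ {N : ℕ} (α β γ : Fin N → ℝ) :
    zLayer γ * rotYZ α β = rotYZ α (γ + β) := by
  simp [rotYZ_eq, zLayer, tens_mul, ← mul_assoc, RzM_mul]

lemma ladder_comm_zLayer {N : ℕ} (γ : Fin N → ℝ) :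
    ladderCZ N * zLayer γ = zLayer γ * ladderCZ N := by
  simp only [zLayer, RzM_eq, tens_diagonal, ladderCZ_eq, Matrix.diagonal_mul_diagonal, mul_comm]

lemma tens_euler {N : ℕ} {g : Fin N → Matrix (ZMod 2) (ZMod 2) ℂ}
    (hg : ∀ k, g k ∈ Matrix.unitaryGroup (ZMod 2) ℂ) :
    ∃ (φ : ℝ) (α β γ : Fin N → ℝ), tens g = Complex.exp (φ * I) • (rotYZ α β * zLayer γ) := by
  choose φ α β γ h using fun k => euler (hg k)
  refine ⟨∑ k, φ k, α, β, γ, ?_⟩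
  rw [rotYZ_eq, zLayer, tens_mul]
  ext x y
  simp only [tens, Matrix.of_apply, Matrix.smul_apply]
  push_cast
  rw [Finset.sum_mul, Complex.exp_sum, smul_eq_mul, ← Finset.prod_mul_distrib]
  refine Finset.prod_congr rfl fun k _ => ?_
  conv_lhs => rw [h k]
  rfl

lemma ansatzYZ_succ {N : ℕ} (α β : ℕ → Fin N → ℝ) (M : ℕ) :
    ansatzYZ N α β (M + 1) =
      rotYZ (α (M + 1)) (β (M + 1)) * ladderCZ N * ansatzYZ N α β M := rfl

lemma ansatzYZ_congr {N : ℕ} {α β α' β' : ℕ → Fin N → ℝ} :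
    ∀ {d : ℕ}, (∀ i ≤ d, α i = α' i) → (∀ i ≤ d, β i = β' i) →
      ansatzYZ N α β d = ansatzYZ N α' β' d
  | 0, h, h' => by rw [ansatzYZ, ansatzYZ, h 0 le_rfl, h' 0 le_rfl]
  | d + 1, h, h' => by
    rw [ansatzYZ, ansatzYZ, h _ le_rfl, h' _ le_rfl,
      ansatzYZ_congr (fun i hi => h i (by omega)) (fun i hi => h' i (by omega))]

lemma zLayer_mul_ansatzYZ {N : ℕ} (γ : Fin N → ℝ) (α β : ℕ → Fin N → ℝ) (d : ℕ) :
    zLayer γ * ansatzYZ N α β d = ansatzYZ N α (Function.update β d (γ + β d)) d := by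
  cases d with
  | zero => simp [ansatzYZ, zLayer_mul_rotYZ]
  | succ d =>
    rw [ansatzYZ, ansatzYZ, ← mul_assoc, ← mul_assoc, zLayer_mul_rotYZ, Function.update_self]
    congr 1
    exact ansatzYZ_congr (fun _ _ => rfl)
      (fun i hi => (Function.update_of_ne (by omega) _ _).symm)

/-- A trailing `Rz` layer, which the first rotation layer of the ansatz cannot hold, is produced by
two extra entangling layers, since `Ladder_CZ · Z · Ladder_CZ = Z` for diagonal `Z`. In later
layers it commutes past the ladder and merges with the preceding `Rz`. -/
lemma Circ.exists_ansatz {N d : ℕ} {U : QOp N} (h : Circ N d U) :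
    ∃ (α β : ℕ → Fin N → ℝ) (φ : ℝ), U = Complex.exp (φ * I) • ansatzYZ N α β (d + 2) := by
  induction h with
  | base g hg =>
    obtain ⟨φ, a, b, c, h⟩ := tens_euler hg
    refine ⟨fun i => if i = 2 then a else 0, fun i => if i = 2 then b else if i = 1 then c else 0,
      φ, ?_⟩
    simp only [ansatzYZ]
    simp only [zero_add, reduceIte, OfNat.zero_ne_ofNat, OfNat.one_ne_ofNat, zero_ne_one,
      Nat.reduceAdd]
    rw [rotYZ_zero_left, rotYZ_zero_left, zLayer_zero, mul_one, mul_assoc,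
      ← ladder_comm_zLayer, ← mul_assoc (ladderCZ N), ladder_sq, one_mul, h]
  | step g hg d U hU ih =>
    obtain ⟨α, β, φ, rfl⟩ := ih
    obtain ⟨ψ, a, b, c, h⟩ := tens_euler hg
    refine ⟨Function.update α (d + 3) a,
      Function.update (Function.update β (d + 2) (c + β (d + 2))) (d + 3) b, ψ + φ, ?_⟩
    have h1 : ansatzYZ N (Function.update α (d + 3) a)
        (Function.update (Function.update β (d + 2) (c + β (d + 2))) (d + 3) b) (d + 2) =
        zLayer c * ansatzYZ N α β (d + 2) := by
      rw [zLayer_mul_ansatzYZ]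
      exact ansatzYZ_congr (fun i hi => Function.update_of_ne (by omega) _ _)
        (fun i hi => Function.update_of_ne (by omega) _ _)
    rw [show d + 1 + 2 = (d + 2) + 1 by omega, ansatzYZ_succ _ _ (d + 2), h1, h, Function.update_self,
      Function.update_self, smul_mul_assoc, smul_mul_assoc, mul_smul_comm, smul_smul,
      mul_assoc (rotYZ a b), ← ladder_comm_zLayer, Complex.ofReal_add, add_mul, Complex.exp_add]
    simp only [mul_assoc]

lemma Circ.list_prod {N : ℕ} (gs : List (QOp N))
    (hg : ∀ g ∈ gs,
      (∃ k : Fin N, g = gate1 HM k) ∨ (∃ k : Fin N, g = gate1 TM k) ∨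
        (∃ k l : Fin N, k ≠ l ∧ g = CNOTg k l)) :
    ∃ d ≤ 12 * N ^ 2 * gs.length, Circ N d gs.prod := by
  induction gs with
  | nil => exact ⟨0, by simp, by simpa using Circ.one⟩
  | cons g gs ih =>
    obtain ⟨d, hd, hU⟩ := ih fun g' h => hg g' (List.mem_cons_of_mem _ h)
    obtain ⟨e, he, hV⟩ : ∃ e ≤ 12 * N ^ 2, Circ N e g := by
      rcases hg g List.mem_cons_self with ⟨k, rfl⟩ | ⟨k, rfl⟩ | ⟨k, l, hkl, rfl⟩
      · exact ⟨0, by simp, Circ.single HM_mem k⟩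
      · exact ⟨0, by simp, Circ.single TM_mem k⟩
      · exact Circ.CNOT hkl
    refine ⟨e + d, ?_, by simpa using hV.mul hU⟩
    rw [List.length_cons, mul_add, mul_one, add_comm]
    exact add_le_add hd he

/-- strict universality of the Ry-Rz-CZ ansatz: for `N ≥ 2` and any
`N`-qubit circuit `U = g_m ⋯ g_1` (`g_1` applied first, i.e. the product of the list
`gs = [g_m, …, g_1]`) whose gates are Hadamards, T gates, or CNOTs, there are a depth
`M ≤ 192·N²·m + 2·m`, angles, and a global phase `φ` such that the depth-`M`
Ry-Rz-CZ ansatz equals `e^{iφ}·U`. -/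
theorem ryRzCZ_strictly_universal (N : ℕ) (hN : 2 ≤ N) (gs : List (QOp N))
    (hg : ∀ g ∈ gs,
      (∃ k : Fin N, g = gate1 HM k) ∨ (∃ k : Fin N, g = gate1 TM k) ∨
        (∃ k l : Fin N, k ≠ l ∧ g = CNOTg k l)) :
    ∃ M : ℕ, M ≤ 192 * N ^ 2 * gs.length + 2 * gs.length ∧
      ∃ (α β : ℕ → Fin N → ℝ) (φ : ℝ),
        ansatzYZ N α β M = Complex.exp (φ * Complex.I) • gs.prod := by
  rcases gs with _ | ⟨g, gs⟩
  · refine ⟨0, by simp, fun _ => 0, fun _ => 0, 0, ?_⟩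
    change rotYZ 0 0 = _
    rw [rotYZ_zero_left, zLayer_zero]
    simp
  · obtain ⟨d, hd, hU⟩ := Circ.list_prod (g :: gs) hg
    obtain ⟨α, β, φ, h⟩ := hU.exists_ansatz
    refine ⟨d + 2, ?_, α, β, -φ, ?_⟩
    · have h1 : 1 ≤ (g :: gs).length := by simp
      have h2 : 12 * N ^ 2 * (g :: gs).length ≤ 192 * N ^ 2 * (g :: gs).length := by gcongr; norm_num
      omega
    · rw [h, smul_smul, ← Complex.exp_add]
      simp
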